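/- Let X = Spec(B) be given by a local presentation attached to the multiplicity as in the context, with elimination algebra G_X^{(d)} and closed point ξ. Then for every arc φ in X through ξ: (1) r_{X,φ}/ord(φ) ≥ ρ_{X,φ}/ord(φ), and (2) ρ_{X,φ}/ord(φ) ≥ ⌊ord(G_X^{(d)})⌋. -/

import Mathlib

open Polynomial
open scoped ENNReal

noncomputable section

namespace NashMult

/-- The `m`-adic order `ν(f)` of an element `f` of a ring: the largest `n` with `f ∈ m ^ n`. -/
def adicOrder {R : Type*} [CommRing R] (m : Ideal R) (f : R) : ℕ :=
  sSup {n : ℕ | f ∈ m ^ n}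

/-- A subalgebra `G ⊆ R[W]` is *graded* if it is spanned by its "monomials", i.e. it is closed
under taking homogeneous components.  This is the condition expressing that `G = ⊕ I_l W^l`
for a family of ideals `I_l` (with `I_0 = R` and `I_i · I_j ⊆ I_{i+j}` automatic). -/
def Graded {R : Type*} [CommRing R] (G : Subalgebra R (Polynomial R)) : Prop :=
  ∀ p ∈ G, ∀ n : ℕ, (C (p.coeff n) * X ^ n : Polynomial R) ∈ G

/-- A *Rees algebra* over `R`: a finitely generated graded subalgebra of `R[W]`. -/
def IsReesAlgebra {R : Type*} [CommRing R] (G : Subalgebra R (Polynomial R)) : Prop :=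
  G.FG ∧ Graded G

/-- The order of (the Rees algebra) `G` at the closed point of the local ring `(R, m)`:
`ord(G) = inf { ν(f)/n : f W^n a homogeneous element of G, n ≥ 1, f ≠ 0 }`
(with value `∞` for the empty infimum). -/
def reesOrder {R : Type*} [CommRing R] (m : Ideal R) (G : Subalgebra R (Polynomial R)) : ℝ≥0∞ :=
  sInf {q : ℝ≥0∞ | ∃ (f : R) (n : ℕ), f ≠ 0 ∧ 1 ≤ n ∧ (C f * X ^ n : Polynomial R) ∈ G ∧
    q = (adicOrder m f : ℝ≥0∞) / (n : ℝ≥0∞)}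

/-- `G = ⊕ I_l W^l` is *differentially closed* relative to a family `D` of derivations if
`I_{l+1} ⊆ I_l` and `D_j (I_l) ⊆ I_{l-1}` for all `l ≥ 1` and all `j`. -/
def DiffClosed {k R ι : Type*} [CommRing k] [CommRing R] [Algebra k R]
    (D : ι → Derivation k R R) (G : Subalgebra R (Polynomial R)) : Prop :=
  (∀ (f : R) (l : ℕ), 1 ≤ l → (C f * X ^ (l + 1) : Polynomial R) ∈ G →
      (C f * X ^ l : Polynomial R) ∈ G) ∧
  (∀ (f : R) (l : ℕ) (j : ι), (C f * X ^ (l + 1) : Polynomial R) ∈ G →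
      (C (D j f) * X ^ l : Polynomial R) ∈ G)

/-- `Diff(M)`: the smallest graded differentially closed subalgebra of `R[W]` containing the
set `M`. -/
def diffClosure {k R ι : Type*} [CommRing k] [CommRing R] [Algebra k R]
    (D : ι → Derivation k R R) (M : Set (Polynomial R)) : Subalgebra R (Polynomial R) :=
  sInf {G : Subalgebra R (Polynomial R) | M ⊆ ↑G ∧ Graded G ∧ DiffClosed D G}

/-- The image `ψ(G)` of a Rees algebra `G` over `R` under a homomorphism (arc) `ψ : R → K⟦t⟧`:
the Rees algebra over `K⟦t⟧` generated by all `ψ(g) W^l` for `g W^l` a homogeneous element of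
`G` with `ψ(g) ≠ 0`. -/
def arcImage {R A : Type*} [CommRing R] [CommRing A] (ψ : R → A)
    (G : Subalgebra R (Polynomial R)) : Subalgebra A (Polynomial A) :=
  Algebra.adjoin A {p : Polynomial A | ∃ (g : R) (l : ℕ),
    (C g * X ^ l : Polynomial R) ∈ G ∧ ψ g ≠ 0 ∧ p = C (ψ g) * X ^ l}

/-- The order `ord(ψ)` of an arc `ψ : R → K⟦t⟧`: the largest `n` such that
`ψ(m) ⊆ t^n` (`t` being the ideal `tI`). -/
def homOrd {R A : Type*} [CommRing R] [CommRing A] (m : Ideal R) (tI : Ideal A)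
    (ψ : R → A) : ℕ :=
  sSup {n : ℕ | ∀ s ∈ m, ψ s ∈ tI ^ n}

/-- The maximal ideal `(t)` of `K⟦t⟧`. -/
def tId (K : Type*) [CommRing K] : Ideal (PowerSeries K) :=
  Ideal.span {(PowerSeries.X : PowerSeries K)}

/-- The `t`-adic order on `K⟦t⟧`. -/
def tOrd {K : Type*} [CommRing K] (g : PowerSeries K) : ℕ :=
  adicOrder (tId K) g

/-- The family of ideals `I_l` of the graded algebra `G = ⊕ I_l W^l`. -/
def idealFam {R : Type*} [CommRing R] (G : Subalgebra R (Polynomial R)) (l : ℕ) : Ideal R :=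
  Submodule.comap (Polynomial.monomial l : R →ₗ[R] Polynomial R) (Subalgebra.toSubmodule G)

/-- The closed point of the local ring `(R, m)` belongs to the singular locus of
`G = ⊕ I_l W^l`, i.e. `ν(I_l) ≥ l` for all `l ≥ 1`. -/
def SingFam {R : Type*} [CommRing R] (m : Ideal R) (I : ℕ → Ideal R) : Prop :=
  ∀ l : ℕ, 1 ≤ l → I l ≤ m ^ l

/-- The transform `⊕ (I_l · T^{-l}) W^l` of a Rees algebra `⊕ I_l W^l` over a DVR with
uniformizer `T` (when the closed point lies in the singular locus, `I_l ⊆ (T^l)` and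
`I_l · T^{-l} = (I_l : (T^l))`). -/
def transformFam {R : Type*} [CommRing R] (T : R) (I : ℕ → Ideal R) : ℕ → Ideal R :=
  fun l => (I l).colon (Ideal.span {T ^ l})

/-- The persistance: the least number `κ` of transforms needed so that the closed point no
longer lies in the singular locus. -/
def persist {R : Type*} [CommRing R] (m : Ideal R) (T : R)
    (G : Subalgebra R (Polynomial R)) : ℕ :=
  sInf {κ : ℕ | ¬ SingFam m ((transformFam T)^[κ] (idealFam G))}

/-- The set of elements of a ring integral over a subset `s` (monic equation with
coefficients in `s`). -/
def intClos {A : Type*} [CommRing A] (s : Set A) : Set A :=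
  {p : A | ∃ q : Polynomial A, q.Monic ∧ (∀ n, q.coeff n ∈ s) ∧ Polynomial.eval p q = 0}


/-- The monic polynomial `f = x^b + B_{b-2} x^{b-2} + ⋯ + B_1 x + B_0` with coefficients
`B_j = Bc j` (only `j ≤ b - 2` is relevant). -/
def minPolyOf {S : Type*} [CommRing S] (b : ℕ) (Bc : ℕ → S) : Polynomial S :=
  Polynomial.X ^ b + ∑ j ∈ Finset.range (b - 1), Polynomial.C (Bc j) * Polynomial.X ^ j


/-- The maximal ideal `(z_1, …, z_d)` of the polynomial ring `k[z_1, …, z_d]`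
(the kernel of evaluation at the origin). -/
def mPoly (k : Type) [Field k] (d : ℕ) : Ideal (MvPolynomial (Fin d) k) :=
  RingHom.ker (MvPolynomial.aeval (fun _ => (0 : k)) : MvPolynomial (Fin d) k →ₐ[k] k)

instance {k : Type} [Field k] {d : ℕ} : (mPoly k d).IsMaximal :=
  RingHom.ker_isMaximal_of_surjective _ (fun a => ⟨MvPolynomial.C a, by simp⟩)

instance {k : Type} [Field k] {d : ℕ} : (mPoly k d).IsPrime :=
  (inferInstance : (mPoly k d).IsMaximal).isPrime

/-- `IsSLoc k d S` says that `S` is (identified with) the localization of `k[z_1, …, z_d]`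
at the maximal ideal `(z_1, …, z_d)`. -/
abbrev IsSLoc (k : Type) [Field k] (d : ℕ) (S : Type) [CommRing S]
    [Algebra (MvPolynomial (Fin d) k) S] : Prop :=
  IsLocalization.AtPrime S (mPoly k d)

/-- The element `z_j` of `S`. -/
def zvar (k : Type) [Field k] (d : ℕ) (S : Type) [CommRing S]
    [Algebra (MvPolynomial (Fin d) k) S] (j : Fin d) : S :=
  algebraMap (MvPolynomial (Fin d) k) S (MvPolynomial.X j)

/-- The maximal ideal `m = (z_1, …, z_d)` of the local ring `S`. -/
def mS (k : Type) [Field k] (d : ℕ) (S : Type) [CommRing S]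
    [Algebra (MvPolynomial (Fin d) k) S] : Ideal S :=
  (mPoly k d).map (algebraMap (MvPolynomial (Fin d) k) S)


variable (k : Type) [Field k] (d : ℕ)
variable (S : Type) [CommRing S] [Algebra (MvPolynomial (Fin d) k) S] [Algebra k S]

/-- A local presentation, attached to the multiplicity, of a `d`-dimensional variety
`X = Spec B` at the closed point `ξ`:  `B = S[x_1,…,x_{n-d}]/I` with `I` prime,
`S → B` injective and finite, and the minimal polynomial over `Frac S` of the class `θ_i`
of `x_i` is `f_i = x_i^{b_i} + B_{i,b_i-2} x_i^{b_i-2} + ⋯ + B_{i,0}` with `b_i ≥ 2`,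
`B_{i,j} ∈ m^{b_i - j}`, and some `B_{i,j} ≠ 0`. -/
structure Presentation [IsDomain S] : Type 1 where
  /-- the number `n - d ≥ 1` of extra variables `x_i` -/
  e : ℕ
  he : 1 ≤ e
  /-- the prime ideal `I ⊆ S[x_1,…,x_{n-d}]` defining `X` -/
  I : Ideal (MvPolynomial (Fin e) S)
  hprime : I.IsPrime
  hinj : Function.Injective (algebraMap S (MvPolynomial (Fin e) S ⧸ I))
  hfinite : Module.Finite S (MvPolynomial (Fin e) S ⧸ I)
  /-- the degrees `b_i ≥ 2` -/
  b : Fin e → ℕ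
  hb : ∀ i, 2 ≤ b i
  /-- the coefficients `B_{i,j}` (only `j ≤ b_i - 2` is relevant) -/
  Bc : Fin e → ℕ → S
  /-- `f_i(θ_i) = 0` -/
  hroot : ∀ i, Polynomial.aeval (Ideal.Quotient.mk I (MvPolynomial.X i))
    (minPolyOf (b i) (Bc i)) = 0
  /-- `f_i` is irreducible over `Frac S`, i.e. it is the minimal polynomial of `θ_i` -/
  hirr : ∀ i, Irreducible ((minPolyOf (b i) (Bc i)).map (algebraMap S (FractionRing S)))
  /-- `B_{i,j} ∈ m^{b_i - j}` -/
  hmem : ∀ i, ∀ j ≤ b i - 2, Bc i j ∈ (mS k d S) ^ (b i - j)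
  /-- some `B_{i,j} ≠ 0` -/
  hnz : ∃ i, ∃ j ≤ b i - 2, Bc i j ≠ 0

variable [IsDomain S]
variable {k d S}

/-- The coordinate ring `B = S[x_1,…,x_{n-d}]/I` of `X`. -/
abbrev BRing (P : Presentation k d S) : Type :=
  MvPolynomial (Fin P.e) S ⧸ P.I

/-- The class `θ_i` of `x_i` in `B`. -/
def theta (P : Presentation k d S) (i : Fin P.e) : BRing P :=
  Ideal.Quotient.mk P.I (MvPolynomial.X i)

/-- The elimination algebra in dimension `d`:
`G_X^{(d)} = Diff( S[ B_{i,j} W^{b_i - j} : i, j ] )`, a Rees algebra over `S`. -/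
def elimAlg (P : Presentation k d S) (D : Fin d → Derivation k S S) :
    Subalgebra S (Polynomial S) :=
  diffClosure D {p : Polynomial S | ∃ i, ∃ j ≤ P.b i - 2,
    p = Polynomial.C (P.Bc i j) * Polynomial.X ^ (P.b i - j)}

/-- An arc in `X` through `ξ` (with the required nonvanishing): a `k`-algebra homomorphism
`φ : B → K⟦t⟧` sending the maximal ideal of `B` at `ξ` into `(t)`, with all `φ(θ_i)` and
`φ(z_j)` nonzero. -/
def IsArc (P : Presentation k d S) {K : Type} [Field K] [Algebra k K]
    (φ : BRing P →ₐ[k] PowerSeries K) : Prop :=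
  (∀ s ∈ mS k d S, φ (algebraMap S (BRing P) s) ∈ tId K) ∧
  (∀ i, φ (theta P i) ∈ tId K) ∧
  (∀ i, φ (theta P i) ≠ 0) ∧
  (∀ j, φ (algebraMap S (BRing P) (zvar k d S j)) ≠ 0)

/-- The order of an arc: the minimum of the `t`-adic orders of the `φ(θ_i)` and the
`φ(z_j)`. -/
def arcOrd (P : Presentation k d S) {K : Type} [Field K] [Algebra k K]
    (φ : BRing P →ₐ[k] PowerSeries K) : ℕ :=
  sInf ((Set.range fun i => tOrd (φ (theta P i))) ∪
    (Set.range fun j => tOrd (φ (algebraMap S (BRing P) (zvar k d S j)))))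

/-- The contact algebra `G^{(1)}_{X_0,φ}`: the Rees algebra over `K⟦t⟧` generated by the
`φ(θ_i) W` together with all `φ(g) W^l` for `g W^l` a homogeneous element of `G_X^{(d)}`
with `φ(g) ≠ 0`. -/
def contactAlg (P : Presentation k d S) (D : Fin d → Derivation k S S)
    {K : Type} [Field K] [Algebra k K] (φ : BRing P →ₐ[k] PowerSeries K) :
    Subalgebra (PowerSeries K) (Polynomial (PowerSeries K)) :=
  Algebra.adjoin (PowerSeries K)
    ((Set.range fun i => (Polynomial.C (φ (theta P i)) * Polynomial.X :
        Polynomial (PowerSeries K))) ∪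
      {p : Polynomial (PowerSeries K) | ∃ (g : S) (l : ℕ),
        (Polynomial.C g * Polynomial.X ^ l : Polynomial S) ∈ elimAlg P D ∧
        φ (algebraMap S (BRing P) g) ≠ 0 ∧
        p = Polynomial.C (φ (algebraMap S (BRing P) g)) * Polynomial.X ^ l})

/-- The order of contact `r_{X,φ}` of the arc `φ` with `Max mult(X)`: the order of the
contact algebra at the closed point of `K⟦t⟧`. -/
def rOrd (P : Presentation k d S) (D : Fin d → Derivation k S S)
    {K : Type} [Field K] [Algebra k K] (φ : BRing P →ₐ[k] PowerSeries K) : ℝ≥0∞ :=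
  reesOrder (tId K) (contactAlg P D φ)

/-- The persistance `ρ_{X,φ}`: the least number of transforms of the contact algebra
(i.e. of point blow-ups directed by `φ`) needed to make the closed point leave the
singular locus, that is, to lower the Nash multiplicity. -/
def rho (P : Presentation k d S) (D : Fin d → Derivation k S S)
    {K : Type} [Field K] [Algebra k K] (φ : BRing P →ₐ[k] PowerSeries K) : ℕ :=
  persist (tId K) (PowerSeries.X : PowerSeries K) (contactAlg P D φ)


theorem mem_tId_pow {K : Type*} [Field K] (f : PowerSeries K) (n : ℕ) :
    f ∈ tId K ^ n ↔ (PowerSeries.X : PowerSeries K) ^ n ∣ f := by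
  rw [tId, Ideal.span_singleton_pow, Ideal.mem_span_singleton]

theorem exists_ord {K : Type*} [Field K] (f : PowerSeries K) (hf : f ≠ 0) :
    ∃ (a : ℕ) (g : PowerSeries K), f = PowerSeries.X ^ a * g ∧ ¬ PowerSeries.X ∣ g := by
  obtain ⟨a, g, hg, h⟩ := WfDvdMonoid.max_power_factor hf
    (PowerSeries.X_prime (R := K)).irreducible
  exact ⟨a, g, h, hg⟩

theorem dvd_iff_le {K : Type*} [Field K] (g : PowerSeries K) (hg : ¬ PowerSeries.X ∣ g)
    (a n : ℕ) : PowerSeries.X ^ n ∣ PowerSeries.X ^ a * g ↔ n ≤ a := by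
  constructor
  · intro h
    by_contra! hlt
    apply hg
    have h1 : (PowerSeries.X : PowerSeries K) ^ a * PowerSeries.X ∣ PowerSeries.X ^ a * g :=
      (pow_succ (PowerSeries.X : PowerSeries K) a) ▸ (pow_dvd_pow _ hlt).trans h
    exact (mul_dvd_mul_iff_left (pow_ne_zero _ PowerSeries.X_ne_zero)).1 h1
  · intro h
    exact (pow_dvd_pow _ h).mul_right _

theorem adicOrder_eq {K : Type*} [Field K] (g : PowerSeries K) (hg : ¬ PowerSeries.X ∣ g)
    (a : ℕ) : adicOrder (tId K) (PowerSeries.X ^ a * g) = a := by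
  have : {n : ℕ | PowerSeries.X ^ a * g ∈ tId K ^ n} = Set.Iic a := by
    ext n
    simp only [Set.mem_ofPred_eq, mem_tId_pow, dvd_iff_le g hg, Set.mem_Iic]
  rw [adicOrder, this, csSup_Iic]

theorem le_adicOrder {K : Type*} [Field K] (f : PowerSeries K) (hf : f ≠ 0) (n : ℕ) :
    n ≤ adicOrder (tId K) f ↔ PowerSeries.X ^ n ∣ f := by
  obtain ⟨a, g, rfl, hg⟩ := exists_ord f hf
  rw [adicOrder_eq g hg, dvd_iff_le g hg]

theorem mem_iter {R : Type*} [CommRing R] (T : R) (κ : ℕ) (I : ℕ → Ideal R) (l : ℕ) (f : R) :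
    f ∈ (transformFam T)^[κ] I l ↔ T ^ (κ * l) * f ∈ I l := by
  induction κ generalizing f with
  | zero => simp
  | succ κ ih =>
    rw [Function.iterate_succ_apply', transformFam, Ideal.submodule_span_eq.symm,
      Submodule.colon_span, Submodule.mem_colon_singleton, ih, smul_eq_mul]
    rw [show T ^ (κ * l) * (f * T ^ l) = T ^ ((κ + 1) * l) * f by ring]

theorem dvd_of_sing {K : Type*} [Field K] (I : ℕ → Ideal (PowerSeries K)) (κ : ℕ)
    (hs : SingFam (tId K) ((transformFam PowerSeries.X)^[κ] I)) (l : ℕ) (hl : 1 ≤ l)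
    (f : PowerSeries K) (hf : f ∈ I l) : PowerSeries.X ^ ((κ + 1) * l) ∣ f := by
  by_cases h0 : f = 0
  · simp [h0]
  obtain ⟨a, g, rfl, hg⟩ := exists_ord f h0
  rw [dvd_iff_le g hg]
  rcases le_total a (κ * l) with h | h
  · have h1 : g ∈ (transformFam PowerSeries.X)^[κ] I l := by
      rw [mem_iter]
      have := (I l).mul_mem_left (PowerSeries.X ^ (κ * l - a)) hf
      rwa [← mul_assoc, ← pow_add, Nat.sub_add_cancel h] at this
    have h2 := (mem_tId_pow _ _).1 (hs l hl h1)
    exact absurd ((dvd_pow_self _ (by omega)).trans h2) hg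
  · have h1 : PowerSeries.X ^ (a - κ * l) * g ∈ (transformFam PowerSeries.X)^[κ] I l := by
      rw [mem_iter, ← mul_assoc, ← pow_add, Nat.add_sub_cancel' h]
      exact hf
    have h2 := (mem_tId_pow _ _).1 (hs l hl h1)
    rw [dvd_iff_le g hg] at h2
    rw [add_mul]
    omega

theorem sing_of_dvd {K : Type*} [Field K] (I : ℕ → Ideal (PowerSeries K)) (κ : ℕ)
    (h : ∀ l, 1 ≤ l → ∀ f ∈ I l, PowerSeries.X ^ ((κ + 1) * l) ∣ f) :
    SingFam (tId K) ((transformFam PowerSeries.X)^[κ] I) := by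
  intro l hl f hf
  rw [mem_iter] at hf
  have := h l hl _ hf
  rw [mem_tId_pow]
  rw [add_mul, pow_add, one_mul] at this
  exact (mul_dvd_mul_iff_left (pow_ne_zero _ PowerSeries.X_ne_zero)).1 this

theorem mem_idealFam {R : Type*} [CommRing R] (G : Subalgebra R (Polynomial R)) (l : ℕ) (f : R) :
    f ∈ idealFam G l ↔ (C f * X ^ l : Polynomial R) ∈ G := by
  rw [C_mul_X_pow_eq_monomial]; rfl

/-- The subalgebra of polynomials whose `n`-th coefficient is divisible by `T ^ (c * n)`. -/
def boundAlg {R : Type*} [CommRing R] (T : R) (c : ℕ) : Subalgebra R (Polynomial R) where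
  carrier := {p | ∀ n, T ^ (c * n) ∣ p.coeff n}
  mul_mem' := by
    intro p q hp hq n
    rw [coeff_mul]
    refine Finset.dvd_sum fun x hx => ?_
    rw [← Finset.HasAntidiagonal.mem_antidiagonal.1 hx, mul_add, pow_add]
    exact mul_dvd_mul (hp _) (hq _)
  add_mem' := by
    intro p q hp hq n
    rw [coeff_add]
    exact dvd_add (hp n) (hq n)
  algebraMap_mem' := by
    intro r n
    rw [Polynomial.algebraMap_apply, coeff_C]
    split_ifs with h
    · simp [h]
    · simp

theorem mem_pow_of_le_adicOrder {R : Type*} [CommRing R] (m : Ideal R) (f : R) (n : ℕ)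
    (h : n ≤ adicOrder m f) : f ∈ m ^ n := by
  rcases Nat.eq_zero_or_pos n with rfl | hn
  · simp
  have hb : BddAbove {n : ℕ | f ∈ m ^ n} := by
    by_contra hb
    rw [adicOrder, Nat.sSup_of_not_bddAbove hb] at h
    omega
  have := Nat.sSup_mem (s := {n : ℕ | f ∈ m ^ n}) ⟨0, by simp⟩ hb
  exact Ideal.pow_le_pow_right h this

theorem mPoly_le {k : Type} [Field k] {d : ℕ} (J : Ideal (MvPolynomial (Fin d) k))
    (hJ : ∀ j, MvPolynomial.X j ∈ J) : mPoly k d ≤ J := by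
  have key : ∀ p : MvPolynomial (Fin d) k,
      p - MvPolynomial.C (MvPolynomial.aeval (fun _ => (0 : k)) p) ∈ J := by
    intro p
    induction p using MvPolynomial.induction_on with
    | C a => simp
    | add p q hp hq =>
      rw [map_add, map_add, add_sub_add_comm]
      exact J.add_mem hp hq
    | mul_X p j hp =>
      simpa using J.mul_mem_left p (hJ j)
  intro p hp
  have hp' : MvPolynomial.aeval (fun _ => (0 : k)) p = (0 : k) := hp
  simpa [hp'] using key p

theorem root_bound {K : Type*} [Field K] (b : ℕ) (hb : 2 ≤ b) (c : ℕ) (B : ℕ → PowerSeries K)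
    (hB : ∀ j ≤ b - 2, PowerSeries.X ^ (c * (b - j)) ∣ B j) (x : PowerSeries K) (hx : x ≠ 0)
    (h : x ^ b + ∑ j ∈ Finset.range (b - 1), B j * x ^ j = 0) : PowerSeries.X ^ c ∣ x := by
  obtain ⟨a, g, rfl, hg⟩ := exists_ord x hx
  rw [dvd_iff_le g hg]
  by_contra! hlt
  have hgb : ¬ PowerSeries.X ∣ g ^ b := fun h' =>
    hg ((PowerSeries.X_prime (R := K)).dvd_of_dvd_pow h')
  have h1 : PowerSeries.X ^ (a * b + 1) ∣
      ∑ j ∈ Finset.range (b - 1), B j * (PowerSeries.X ^ a * g) ^ j := by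
    refine Finset.dvd_sum fun j hj => ?_
    have hj' := Finset.mem_range.1 hj
    have h2 : PowerSeries.X ^ (c * (b - j) + a * j) ∣ B j * (PowerSeries.X ^ a * g) ^ j := by
      rw [pow_add, mul_pow, pow_mul _ a j]
      exact mul_dvd_mul (hB j (by omega)) (dvd_mul_right _ _)
    refine (pow_dvd_pow _ ?_).trans h2
    obtain ⟨e, rfl⟩ : ∃ e, b = j + (e + 1) := ⟨b - j - 1, by omega⟩
    rw [Nat.add_sub_cancel_left]
    have : (a + 1) * (e + 1) ≤ c * (e + 1) := Nat.mul_le_mul_right _ hlt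
    nlinarith
  have h3 : PowerSeries.X ^ (a * b + 1) ∣ PowerSeries.X ^ (a * b) * g ^ b := by
    have := (dvd_add_left h1).1 (h ▸ dvd_zero _)
    rwa [mul_pow, ← pow_mul] at this
  rw [dvd_iff_le _ hgb] at h3
  omega

/-- (Final Corollary.)  For every arc `φ` in `X` through `ξ`:
(1) `r̄_{X,φ} ≥ ρ̄_{X,φ}`, and (2) `ρ̄_{X,φ} ≥ ⌊ord(G_X^{(d)})⌋`. -/
theorem normalized_persistance_bounds
    (k : Type) [Field k] [CharZero k] (d : ℕ) (hd : 1 ≤ d)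
    (S : Type) [CommRing S] [IsDomain S] [Algebra (MvPolynomial (Fin d) k) S]
    [Algebra k S] [IsScalarTower k (MvPolynomial (Fin d) k) S] [IsSLoc k d S]
    (D : Fin d → Derivation k S S)
    (hD : ∀ i j : Fin d, D j (zvar k d S i) = if i = j then 1 else 0)
    (P : Presentation k d S)
    (K : Type) [Field K] [Algebra k K]
    (φ : BRing P →ₐ[k] PowerSeries K) (hφ : IsArc P φ) :
    (rho P D φ : ℝ≥0∞) / (arcOrd P φ : ℝ≥0∞) ≤ rOrd P D φ / (arcOrd P φ : ℝ≥0∞) ∧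
    (Nat.floor (reesOrder (mS k d S) (elimAlg P D)).toReal : ℝ≥0∞) ≤
      (rho P D φ : ℝ≥0∞) / (arcOrd P φ : ℝ≥0∞) := by
  obtain ⟨h1, h2, h3, h4⟩ := hφ
  set ψ : S →+* PowerSeries K := (φ : BRing P →+* PowerSeries K).comp
    (algebraMap S (BRing P)) with hψ
  have hψa : ∀ s, φ (algebraMap S (BRing P) s) = ψ s := fun s => rfl
  have hθmem : ∀ i, φ (theta P i) ∈ idealFam (contactAlg P D φ) 1 := by
    intro i
    rw [mem_idealFam, pow_one]
    exact Algebra.subset_adjoin (Or.inl ⟨i, rfl⟩)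
  -- the set defining `rho` is nonempty
  have hne : {κ : ℕ | ¬ SingFam (tId K) ((transformFam (PowerSeries.X : PowerSeries K))^[κ]
      (idealFam (contactAlg P D φ)))}.Nonempty := by
    obtain ⟨a, g, hag, hg⟩ := exists_ord _ (h3 ⟨0, P.he⟩)
    refine ⟨a, fun hs => ?_⟩
    have := dvd_of_sing _ a hs 1 le_rfl _ (hθmem ⟨0, P.he⟩)
    rw [hag, dvd_iff_le g hg] at this
    omega
  have hz : ∀ s ∈ mS k d S, ψ s ∈ tId K ^ arcOrd P φ := by
    have : mS k d S ≤ (tId K ^ arcOrd P φ).comap ψ := by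
      rw [mS, Ideal.map_le_iff_le_comap]
      refine mPoly_le _ fun j => ?_
      change ψ (zvar k d S j) ∈ tId K ^ arcOrd P φ
      rw [mem_tId_pow, ← hψa, ← le_adicOrder _ (h4 j)]
      exact Nat.sInf_le (Or.inr ⟨j, rfl⟩)
    exact this
  have hpos : 1 ≤ arcOrd P φ := by
    refine le_csInf ⟨_, Or.inl ⟨⟨0, P.he⟩, rfl⟩⟩ ?_
    rintro _ (⟨i, rfl⟩ | ⟨j, rfl⟩)
    · have := h2 i
      exact (le_adicOrder _ (h3 i) 1).2 ((mem_tId_pow _ 1).1 (by simpa using this))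
    · have := h1 (zvar k d S j) (Ideal.mem_map_of_mem _ (by
        change MvPolynomial.aeval (fun _ => (0 : k)) (MvPolynomial.X j) = 0
        simp))
      exact (le_adicOrder _ (h4 j) 1).2 ((mem_tId_pow _ 1).1 (by simpa using this))
  constructor
  · refine ENNReal.div_le_div_right ?_ _
    refine le_sInf ?_
    rintro _ ⟨f, n, hf, hn, hfG, rfl⟩
    have hn0 : (n : ℝ≥0∞) ≠ 0 := by
      have : n ≠ 0 := by omega
      exact_mod_cast this
    rw [ENNReal.le_div_iff_mul_le (Or.inl hn0) (Or.inl (ENNReal.natCast_ne_top n))]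
    have : rho P D φ * n ≤ adicOrder (tId K) f := by
      rw [le_adicOrder f hf]
      rcases hr : rho P D φ with _ | κ
      · simp
      · have hs : SingFam (tId K) ((transformFam (PowerSeries.X : PowerSeries K))^[κ]
            (idealFam (contactAlg P D φ))) := by
          by_contra hcon
          have : rho P D φ ≤ κ := Nat.sInf_le hcon
          omega
        exact dvd_of_sing _ κ hs n hn f ((mem_idealFam _ _ _).2 hfG)
    exact_mod_cast this
  · set N := Nat.floor (reesOrder (mS k d S) (elimAlg P D)).toReal with hN
    have hpos0 : (arcOrd P φ : ℝ≥0∞) ≠ 0 := by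
      have : arcOrd P φ ≠ 0 := by omega
      exact_mod_cast this
    rw [ENNReal.le_div_iff_mul_le (Or.inl hpos0) (Or.inl (ENNReal.natCast_ne_top _))]
    have hNle : (N : ℝ≥0∞) ≤ reesOrder (mS k d S) (elimAlg P D) := by
      have h := Nat.floor_le (ENNReal.toReal_nonneg (a := reesOrder (mS k d S) (elimAlg P D)))
      rw [← hN] at h
      calc (N : ℝ≥0∞) = ENNReal.ofReal (N : ℝ) := by simp
        _ ≤ ENNReal.ofReal (reesOrder (mS k d S) (elimAlg P D)).toReal :=
          ENNReal.ofReal_le_ofReal h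
        _ ≤ _ := ENNReal.ofReal_toReal_le
    have hg : ∀ (g : S) (l : ℕ), (C g * X ^ l : Polynomial S) ∈ elimAlg P D →
        PowerSeries.X ^ (N * arcOrd P φ * l) ∣ ψ g := by
      intro g l hgl
      by_cases hg0 : g = 0
      · simp [hg0]
      rcases Nat.eq_zero_or_pos l with rfl | hl
      · simp
      have hle : N * l ≤ adicOrder (mS k d S) g := by
        have h := hNle.trans (sInf_le ⟨g, l, hg0, hl, hgl, rfl⟩)
        have hl0 : (l : ℝ≥0∞) ≠ 0 := by
          have : l ≠ 0 := by omega
          exact_mod_cast this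
        rw [ENNReal.le_div_iff_mul_le (Or.inl hl0) (Or.inl (ENNReal.natCast_ne_top l))] at h
        exact_mod_cast h
      have hm := mem_pow_of_le_adicOrder _ _ _ hle
      have hmap : (mS k d S).map ψ ≤ tId K ^ arcOrd P φ := Ideal.map_le_iff_le_comap.2 hz
      have h5 := Ideal.mem_map_of_mem ψ hm
      rw [Ideal.map_pow] at h5
      have h6 := Ideal.pow_right_mono hmap (N * l) h5
      rw [← pow_mul, mem_tId_pow] at h6
      rwa [show N * arcOrd P φ * l = arcOrd P φ * (N * l) by ring]
    have hB : ∀ i, ∀ j ≤ P.b i - 2, PowerSeries.X ^ (N * arcOrd P φ * (P.b i - j)) ∣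
        ψ (P.Bc i j) := by
      intro i j hj
      refine hg _ _ ?_
      refine Algebra.mem_sInf.2 ?_
      rintro G ⟨hG, -⟩
      exact hG ⟨i, j, hj, rfl⟩
    have hθ : ∀ i, PowerSeries.X ^ (N * arcOrd P φ) ∣ φ (theta P i) := by
      intro i
      refine root_bound (P.b i) (P.hb i) _ (fun j => ψ (P.Bc i j)) (hB i) _ (h3 i) ?_
      have h := congrArg φ (P.hroot i)
      rw [minPolyOf] at h
      simp only [map_add, map_sum, map_mul, map_pow, aeval_X, aeval_C, map_zero] at h
      exact h
    have hle : contactAlg P D φ ≤ boundAlg (PowerSeries.X : PowerSeries K)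
        (N * arcOrd P φ) := by
      refine Algebra.adjoin_le ?_
      rintro _ (⟨i, rfl⟩ | ⟨g, l, hgl, -, rfl⟩) n
      · rw [coeff_C_mul, coeff_X]
        split_ifs with h
        · subst h
          simpa using hθ i
        · simp
      · rw [coeff_C_mul, coeff_X_pow]
        split_ifs with h
        · subst h
          rw [mul_one]
          exact hg g n hgl
        · simp
    have hfin : N * arcOrd P φ ≤ rho P D φ := by
      refine le_csInf hne ?_
      intro κ hκ
      by_contra! hlt
      refine hκ (sing_of_dvd _ κ fun l hl f hf => ?_)
      have := hle ((mem_idealFam _ _ _).1 hf) l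
      rw [coeff_C_mul, coeff_X_pow, if_pos rfl, mul_one] at this
      exact (pow_dvd_pow _ (Nat.mul_le_mul_right l hlt)).trans this
    exact_mod_cast hfin

end NashMult
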